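/- arXiv:2202.10414 — 5 statements merged into one kernel-verified Lean document; each statement's English description precedes it below -/
import Mathlib

section
/- Let n > 1 and κ > 0, and set x₀* := ln(κn/(n−1)). Then for every x ∈ ℝ one has (κ/(n−1))·(κn/(n−1))^{−n}·e^{nx} ≥ e^x − κ, with equality if and only if x = x₀*. -/
/-!
Put `c = κn/(n−1)` and `u = e^x / c = e^(x − ln c)`. The dominating function is `κ/(n−1) · u^n`, and
`e^x − κ = κ/(n−1) · (1 + n(u − 1))`, its tangent line at `u = 1`. The claim is therefore Bernoulli's
inequality for the real exponent `n > 1`, which is strict unless `u = 1`, i.e. `x = ln c`.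
-/

/-- Obstacle inequality: for `n > 1` and `κ > 0`, the function
`(κ/(n−1))(κn/(n−1))^{−n} e^{nx}` dominates the payoff `e^x − κ` everywhere,
with equality exactly at `x₀* = ln(κn/(n−1))`. -/
theorem stmt2 (n κ : ℝ) (hn : 1 < n) (hκ : 0 < κ) (x : ℝ) :
    Real.exp x - κ ≤ κ / (n - 1) * (κ * n / (n - 1)) ^ (-n) * Real.exp (n * x) ∧
    (κ / (n - 1) * (κ * n / (n - 1)) ^ (-n) * Real.exp (n * x) = Real.exp x - κ ↔
      x = Real.log (κ * n / (n - 1))) := by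
  have hn1 : 0 < n - 1 := sub_pos.mpr hn
  have ha : 0 < κ / (n - 1) := div_pos hκ hn1
  have hc : 0 < κ * n / (n - 1) := by positivity
  set u := Real.exp (x - Real.log (κ * n / (n - 1))) with hu
  have hu0 : 0 < u := Real.exp_pos _
  have hL : κ / (n - 1) * (κ * n / (n - 1)) ^ (-n) * Real.exp (n * x)
      = κ / (n - 1) * u ^ n := by
    rw [mul_assoc, Real.rpow_def_of_pos hc, ← Real.exp_add, hu, ← Real.exp_mul]
    congr 2
    ring
  have hR : Real.exp x - κ = κ / (n - 1) * (1 + n * (u - 1)) := by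
    have hx : Real.exp x = κ * n / (n - 1) * u := by
      rw [hu, Real.exp_sub, Real.exp_log hc, mul_div_cancel₀ _ hc.ne']
    rw [hx]
    field_simp
    ring
  have hu1 : u = 1 ↔ x = Real.log (κ * n / (n - 1)) := by
    rw [hu, Real.exp_eq_one_iff, sub_eq_zero]
  rw [hL, hR, ← hu1]
  rcases eq_or_ne u 1 with h | h
  · simp [h]
  · have hlt := one_add_mul_self_lt_rpow_one_add (s := u - 1) (by linarith) (sub_ne_zero.mpr h) hn
    rw [add_sub_cancel] at hlt
    have hlt' := mul_lt_mul_of_pos_left hlt ha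
    exact ⟨hlt'.le, fun e => absurd e hlt'.ne', fun e => absurd e h⟩
end

section
/- Let σ > 0, κ > 0, μ₀ ∈ ℝ and r > μ₀ + σ²/2, let n be the unique positive root of (σ²/2)n² + μ₀n − r = 0, and set x₀* := ln(κn/(n−1)). Then for every x ≥ x₀* one has e^x·(σ²/2 + μ₀ − r) + rκ < 0; equivalently, the payoff function x ↦ e^x − κ satisfies (σ²/2)∂ₓₓ + μ₀∂ₓ − r applied to it is strictly negative on the stopping region [x₀*, ∞). -/
/-!
If `r ≤ 0`, both summands are nonpositive and the first is negative. If `r > 0`, the quadratic is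
negative at `0` and at `1`, so by convexity its root satisfies `n > 1`, and `x ≥ x₀*` means
`e^x (n - 1) ≥ κ n`. Multiplying the claim by `n - 1` and inserting the root equation bounds it by
`κ (n (σ²/2 + μ₀) - r) = -κ (σ²/2) n (n - 1) < 0`.
-/

/-- The payoff `e^x − κ` is a strict supersolution of `(σ²/2)u'' + μ₀u' − ru = 0`
on the stopping region `[x₀*, ∞)`: for every `x ≥ x₀* = ln(κn/(n−1))` one has
`e^x(σ²/2 + μ₀ − r) + rκ < 0`. -/
theorem stmt3 (σ κ μ₀ r n : ℝ) (hσ : 0 < σ) (hκ : 0 < κ)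
    (hr : μ₀ + σ ^ 2 / 2 < r)
    (hn : 0 < n) (hroot : σ ^ 2 / 2 * n ^ 2 + μ₀ * n - r = 0) :
    ∀ x : ℝ, Real.log (κ * n / (n - 1)) ≤ x →
      Real.exp x * (σ ^ 2 / 2 + μ₀ - r) + r * κ < 0 := by
  intro x hx
  have hA : σ ^ 2 / 2 + μ₀ - r < 0 := by linarith
  have hs : 0 < σ ^ 2 / 2 := by positivity
  -- For `r < 0` the quadratic may also have a root in `(0, 1)`, where `x₀*` is the logarithm of a
  -- negative number; the claim then holds for every `x`.
  rcases le_or_gt r 0 with hr0 | hr0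
  · have h1 := mul_neg_of_pos_of_neg (Real.exp_pos x) hA
    have h2 := mul_nonpos_of_nonpos_of_nonneg hr0 hκ.le
    linarith
  · have hn1 : 1 < n := by
      by_contra! h
      have h1 : n * (σ ^ 2 / 2 + μ₀ - r) < 0 := mul_neg_of_pos_of_neg hn hA
      have h2 : 0 ≤ r * (1 - n) := mul_nonneg hr0.le (by linarith)
      have h3 : 0 ≤ σ ^ 2 / 2 * (n * (1 - n)) :=
        mul_nonneg hs.le (mul_nonneg hn.le (by linarith))
      linarith
    have hm : 0 < n - 1 := by linarith
    have hexp : κ * n ≤ Real.exp x * (n - 1) :=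
      (div_le_iff₀ hm).1 ((Real.log_le_iff_le_exp (by positivity)).1 hx)
    have h1 := mul_le_mul_of_nonpos_right hexp hA.le
    have h2 : 0 < κ * (σ ^ 2 / 2 * (n * (n - 1))) := by positivity
    have hroot' : κ * (σ ^ 2 / 2 * n ^ 2 + μ₀ * n - r) = 0 := by rw [hroot, mul_zero]
    refine neg_of_mul_neg_left (b := n - 1) ?_ hm.le
    linarith
end

section
/- Let σ > 0, κ > 0, μ₀ < μ₁, r > μ₁ + σ²/2, and set γ := (μ₁ − μ₀)/σ. Define g(x,z) := e^x(σ²/2 + μ₀ − r) + rκ + e^{(γ/σ)(x+z)}·(e^x(σ²/2 + μ₁ − r) + rκ). If x ∈ ℝ satisfies e^x(r − μ₁ − σ²/2) > rκ, then the partial derivative ∂g/∂x(x,z) = e^x(σ²/2 + μ₀ − r) + (γ/σ)e^{(γ/σ)(x+z)}(e^x(σ²/2 + μ₁ − r) + rκ) + e^{(γ/σ)(x+z)}·e^x(σ²/2 + μ₁ − r) is strictly negative for every z ∈ ℝ. -/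
/-!
The derivative is the sum and product rule. It is negative because it is a sum of three negative
terms: the coefficients `σ² / 2 + μᵢ - r` are negative for both drifts, and the assumption on `x`
says exactly that `e^x (σ² / 2 + μ₁ - r) + r κ < 0`, which is multiplied by `γ / σ > 0` and an
exponential.
-/

/-- If `e^x (r − μ₁ − σ²/2) > rκ`, then the partial derivative in `x` of
`g(x,z) = e^x(σ²/2 + μ₀ − r) + rκ + e^{(γ/σ)(x+z)}(e^x(σ²/2 + μ₁ − r) + rκ)` equals
`e^x(σ²/2 + μ₀ − r) + (γ/σ)e^{(γ/σ)(x+z)}(e^x(σ²/2 + μ₁ − r) + rκ)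
  + e^{(γ/σ)(x+z)} e^x (σ²/2 + μ₁ − r)`, and it is strictly negative for every `z`. -/
theorem stmt6 (σ κ μ₀ μ₁ r : ℝ) (hσ : 0 < σ) (hκ : 0 < κ) (hμ : μ₀ < μ₁)
    (hr : μ₁ + σ ^ 2 / 2 < r)
    (g : ℝ → ℝ → ℝ)
    (hg : ∀ x z : ℝ, g x z =
      Real.exp x * (σ ^ 2 / 2 + μ₀ - r) + r * κ +
        Real.exp ((μ₁ - μ₀) / σ / σ * (x + z)) *
          (Real.exp x * (σ ^ 2 / 2 + μ₁ - r) + r * κ))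
    (x : ℝ) (hx : r * κ < Real.exp x * (r - μ₁ - σ ^ 2 / 2)) :
    ∀ z : ℝ,
      HasDerivAt (fun x' => g x' z)
        (Real.exp x * (σ ^ 2 / 2 + μ₀ - r) +
          (μ₁ - μ₀) / σ / σ * Real.exp ((μ₁ - μ₀) / σ / σ * (x + z)) *
            (Real.exp x * (σ ^ 2 / 2 + μ₁ - r) + r * κ) +
          Real.exp ((μ₁ - μ₀) / σ / σ * (x + z)) * (Real.exp x * (σ ^ 2 / 2 + μ₁ - r))) x ∧
      Real.exp x * (σ ^ 2 / 2 + μ₀ - r) +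
          (μ₁ - μ₀) / σ / σ * Real.exp ((μ₁ - μ₀) / σ / σ * (x + z)) *
            (Real.exp x * (σ ^ 2 / 2 + μ₁ - r) + r * κ) +
          Real.exp ((μ₁ - μ₀) / σ / σ * (x + z)) * (Real.exp x * (σ ^ 2 / 2 + μ₁ - r)) < 0 := by
  intro z
  constructor
  · rw [funext fun x' => hg x' z]
    have h1 : HasDerivAt (fun y : ℝ => (μ₁ - μ₀) / σ / σ * (y + z)) ((μ₁ - μ₀) / σ / σ) x := by
      simpa using ((hasDerivAt_id x).add_const z).const_mul ((μ₁ - μ₀) / σ / σ)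
    have h2 := Real.hasDerivAt_exp x
    refine HasDerivAt.congr_deriv (((h2.mul_const (σ ^ 2 / 2 + μ₀ - r)).add_const (r * κ)).add
      (h1.exp.mul ((h2.mul_const (σ ^ 2 / 2 + μ₁ - r)).add_const (r * κ)))) ?_
    ring
  -- Each of the three summands is negative: the first and last since `μ₀ < μ₁ < r - σ² / 2`,
  -- the middle one by `hx`.
  · have hγ : 0 < (μ₁ - μ₀) / σ / σ := div_pos (div_pos (sub_pos.2 hμ) hσ) hσ
    have a := mul_neg_of_pos_of_neg (Real.exp_pos x) (by linarith : σ ^ 2 / 2 + μ₀ - r < 0)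
    have b := mul_neg_of_pos_of_neg (mul_pos hγ (Real.exp_pos ((μ₁ - μ₀) / σ / σ * (x + z))))
      (by linarith : Real.exp x * (σ ^ 2 / 2 + μ₁ - r) + r * κ < 0)
    have c := mul_neg_of_pos_of_neg (Real.exp_pos ((μ₁ - μ₀) / σ / σ * (x + z)))
      (mul_neg_of_pos_of_neg (Real.exp_pos x) (by linarith : σ ^ 2 / 2 + μ₁ - r < 0))
    linarith
end

section
/- Let α > 0 and let v̂ : ℝ² → ℝ be continuously differentiable. Define Û : ℝ × (0,∞) × ℝ → ℝ by Û(x,y,z) := (1/α)∫_z^{z+αy} v̂(x+z−q, q) dq. Then for every (x,y,z) ∈ ℝ × (0,∞) × ℝ the identity α·∂Û/∂x(x,y,z) − α·∂Û/∂z(x,y,z) + ∂Û/∂y(x,y,z) = v̂(x,z) holds. -/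
/-!
The substitution `q ↦ z + q` turns `α Û(x,y,z)` into `∫₀^{αy} v̂(x - q, z + q) dq`, whose limits no
longer depend on `x` and `z`. Differentiating under the integral sign
(`hasDerivAt_intervalIntegral_of_contDiff`), `α (Û_x - Û_z)` is the integral of
`∂₁v̂ - ∂₂v̂` along the segment `q ↦ (x - q, z + q)`. This integrand is minus the derivative of `v̂`
along that segment, so the integral is `v̂(x, z) - v̂(x - αy, z + αy)`. By the fundamental theorem
of calculus, `Û_y = v̂(x - αy, z + αy)`, which cancels the second term.
-/

/-- Differentiation under the integral sign for a `C¹` integrand: the uniform bound on the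
derivative comes from compactness of a closed ball around `t₀` times the interval. -/
theorem hasDerivAt_intervalIntegral_of_contDiff {G : ℝ × ℝ → ℝ} (hG : ContDiff ℝ 1 G)
    (c t₀ : ℝ) :
    HasDerivAt (fun t => ∫ q in (0 : ℝ)..c, G (t, q))
      (∫ q in (0 : ℝ)..c, fderiv ℝ G (t₀, q) (1, 0)) t₀ := by
  have hc : Continuous fun p : ℝ × ℝ => fderiv ℝ G p (1, 0) :=
    (hG.continuous_fderiv one_ne_zero).clm_apply continuous_const
  obtain ⟨C, hC⟩ := ((isCompact_closedBall t₀ 1).prod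
    (isCompact_uIcc (a := (0 : ℝ)) (b := c))).exists_bound_of_continuousOn hc.continuousOn
  have hGc := hG.continuous
  refine (intervalIntegral.hasDerivAt_integral_of_dominated_loc_of_deriv_le
    (F' := fun t q => fderiv ℝ G (t, q) (1, 0)) (bound := fun _ => C)
    (Metric.closedBall_mem_nhds t₀ one_pos) ?_ ?_ ?_ ?_ ?_ ?_).2
  · exact .of_forall fun t => Continuous.aestronglyMeasurable (by fun_prop)
  · exact Continuous.intervalIntegrable (by fun_prop) _ _
  · exact Continuous.aestronglyMeasurable (hc.comp (by fun_prop : Continuous fun q => (t₀, q)))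
  · exact .of_forall fun q hq t ht => hC (t, q) ⟨ht, Set.uIoc_subset_uIcc hq⟩
  · exact intervalIntegrable_const
  · refine .of_forall fun q _ t _ => ?_
    exact ((hG.differentiable one_ne_zero (t, q)).hasFDerivAt).comp_hasDerivAt t
      ((hasDerivAt_id t).prodMk (hasDerivAt_const t q))

/-- For `v̂ ∈ C¹(ℝ²)` and `Û(x,y,z) = (1/α)∫_z^{z+αy} v̂(x+z−q, q) dq`, the directional
derivative identity `α Û_x − α Û_z + Û_y = v̂(x,z)` holds for every `(x,y,z)` with `y > 0`. -/
theorem stmt8 (α : ℝ) (hα : 0 < α) (vhat : ℝ → ℝ → ℝ)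
    (hv : ContDiff ℝ 1 (fun p : ℝ × ℝ => vhat p.1 p.2))
    (Uhat : ℝ → ℝ → ℝ → ℝ)
    (hU : ∀ x y z : ℝ, Uhat x y z = (1 / α) * ∫ q in z..(z + α * y), vhat (x + z - q) q) :
    ∀ x y z : ℝ, 0 < y →
      α * deriv (fun x' => Uhat x' y z) x - α * deriv (fun z' => Uhat x y z') z +
        deriv (fun y' => Uhat x y' z) y = vhat x z := by
  intro x y z _
  set V : ℝ × ℝ → ℝ := fun p => vhat p.1 p.2 with hV
  have hU' : ∀ x y z : ℝ, Uhat x y z = (1 / α) * ∫ q in (0 : ℝ)..(α * y), V (x - q, z + q) := by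
    intro x y z
    rw [hU]
    have h := intervalIntegral.integral_comp_add_left (a := 0) (b := α * y)
      (fun q => vhat (x + z - q) q) z
    rw [add_zero] at h
    rw [← h]
    congr 2
    ext q
    simp only [hV]
    congr 1
    ring
  have hVd : ∀ p, HasFDerivAt V (fderiv ℝ V p) p := fun p =>
    (hv.differentiable one_ne_zero p).hasFDerivAt
  have hVc : ∀ w : ℝ × ℝ, Continuous fun q : ℝ => fderiv ℝ V (x - q, z + q) w := fun w =>
    ((hv.continuous_fderiv one_ne_zero).comp
      (by fun_prop : Continuous fun q : ℝ => (x - q, z + q))).clm_apply continuous_const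
  have hx : HasDerivAt (fun x' => Uhat x' y z)
      ((1 / α) * ∫ q in (0 : ℝ)..(α * y), fderiv ℝ V (x - q, z + q) (1, 0)) x := by
    simp only [hU']
    refine HasDerivAt.const_mul _ ?_
    refine (hasDerivAt_intervalIntegral_of_contDiff
      (G := fun p => V (p.1 - p.2, z + p.2)) (hv.comp (by fun_prop)) (α * y) x).congr_deriv
      (intervalIntegral.integral_congr fun q _ => ?_)
    have h1 : HasFDerivAt (fun p : ℝ × ℝ => (p.1 - p.2, z + p.2)) _ (x, q) :=
      (hasFDerivAt_fst.sub hasFDerivAt_snd).prodMk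
        ((hasFDerivAt_snd (𝕜 := ℝ) (p := (x, q))).const_add z)
    have h2 := ((hVd (x - q, z + q)).comp (x, q) h1).fderiv
    simp only [Function.comp_def] at h2
    simp [h2]
  have hz : HasDerivAt (fun z' => Uhat x y z')
      ((1 / α) * ∫ q in (0 : ℝ)..(α * y), fderiv ℝ V (x - q, z + q) (0, 1)) z := by
    simp only [hU']
    refine HasDerivAt.const_mul _ ?_
    refine (hasDerivAt_intervalIntegral_of_contDiff
      (G := fun p => V (x - p.2, p.1 + p.2)) (hv.comp (by fun_prop)) (α * y) z).congr_deriv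
      (intervalIntegral.integral_congr fun q _ => ?_)
    have h1 : HasFDerivAt (fun p : ℝ × ℝ => (x - p.2, p.1 + p.2)) _ (z, q) :=
      ((hasFDerivAt_snd (𝕜 := ℝ) (p := (z, q))).const_sub x).prodMk
        ((hasFDerivAt_fst (𝕜 := ℝ) (p := (z, q))).add (hasFDerivAt_snd (𝕜 := ℝ) (p := (z, q))))
    have h2 := ((hVd (x - q, z + q)).comp (z, q) h1).fderiv
    simp only [Function.comp_def] at h2
    simp [h2]
  have hy : HasDerivAt (fun y' => Uhat x y' z) (V (x - α * y, z + α * y)) y := by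
    simp only [hU']
    have hc : Continuous fun q : ℝ => V (x - q, z + q) := hv.continuous.comp (by fun_prop)
    have h := ((hc.integral_hasStrictDerivAt 0 (α * y)).hasDerivAt.comp y
      ((hasDerivAt_id y).const_mul α)).const_mul (1 / α)
    refine h.congr_deriv ?_
    simp only [mul_one]
    field_simp
  have hftc : (∫ q in (0 : ℝ)..(α * y), (fderiv ℝ V (x - q, z + q) (0, 1)
      - fderiv ℝ V (x - q, z + q) (1, 0))) = V (x - α * y, z + α * y) - V (x, z) := by
    have h := intervalIntegral.integral_eq_sub_of_hasDerivAt (a := 0) (b := α * y)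
      (f := fun q => V (x - q, z + q)) (f' := fun q => fderiv ℝ V (x - q, z + q) (0, 1)
      - fderiv ℝ V (x - q, z + q) (1, 0)) ?_
      (((hVc _).sub (hVc _)).intervalIntegrable _ _)
    · simpa using h
    · intro q _
      have h2 := (hVd (x - q, z + q)).comp_hasDerivAt q
        (((hasDerivAt_id q).const_sub x).prodMk ((hasDerivAt_id q).const_add z))
      refine h2.congr_deriv ?_
      rw [← map_sub]
      simp
  rw [intervalIntegral.integral_sub ((hVc _).intervalIntegrable _ _)
    ((hVc _).intervalIntegrable _ _)] at hftc
  rw [hx.deriv, hz.deriv, hy.deriv, ← mul_assoc, ← mul_assoc, mul_one_div_cancel hα.ne']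
  change _ = V (x, z)
  linarith
end

section
/- Let σ > 0, κ > 0, α > 0, μ₀ ∈ ℝ and r > μ₀ + σ²/2; let n be the unique positive root of (σ²/2)n² + μ₀n − r = 0 and set x₀* := ln(κn/(n−1)). Define w₁(x,y) := (1/α)e^x(1 − e^{−αy}) − κy. Then for all (x,y) with y > 0 and x − αy ≥ x₀*, one has (σ²/2)∂ₓₓw₁(x,y) + μ₀∂ₓw₁(x,y) − r·w₁(x,y) ≤ 0. -/
/-!
In the variable `x` the function `w₁(·, y)` has the form `A eˣ - κ y` with
`A = (1 - e^{-αy})/α > 0`, so with `c = r - μ₀ - σ²/2 > 0` the claim reads `r κ y ≤ c A eˣ`.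
If `r < 0` the signs alone give it. (In that case `σ²/2 n² + μ₀ n - r` may have two positive roots,
so `n > 1` is not available.) If `r ≥ 0` then `n > 1` by `one_lt_root`, and the constraint on `x`
says `eˣ ≥ κ n/(n-1) e^{αy}`. Since `e^{αy} - 1 ≥ αy`, it remains to see
`r (n - 1) ≤ c n`, and by the quadratic equation `c n - r (n - 1) = σ²/2 n (n - 1) ≥ 0`.
-/

/-- The quadratic is negative at `1` and nonpositive at `0`, hence, being convex, has no root
in `(0, 1]`. -/
lemma one_lt_root {s μ r n : ℝ} (hs : 0 < s) (hr : μ + s < r) (hr0 : 0 ≤ r) (hn : 0 < n)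
    (hroot : s * n ^ 2 + μ * n - r = 0) : 1 < n := by
  by_contra! h
  nlinarith [mul_nonneg (mul_nonneg hs.le hn.le) (sub_nonneg.2 h),
    mul_pos hn (sub_pos.2 hr), mul_nonneg hr0 (sub_nonneg.2 h)]

/-- The reduced inequality `r κ y ≤ c A eˣ` for `r ≥ 0`. -/
lemma holding_cost_le {s κ α μ r n x y : ℝ} (hs : 0 < s) (hκ : 0 < κ) (hα : 0 < α)
    (hr : μ + s < r) (hr0 : 0 ≤ r) (hn : 0 < n) (hroot : s * n ^ 2 + μ * n - r = 0)
    (hy : 0 < y) (hx : Real.log (κ * n / (n - 1)) ≤ x - α * y) :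
    r * (κ * y) ≤ (r - μ - s) * ((1 / α) * Real.exp x * (1 - Real.exp (-(α * y)))) := by
  have hn1 : 0 < n - 1 := sub_pos.2 (one_lt_root hs hr hr0 hn hroot)
  have hE : κ * n / (n - 1) ≤ Real.exp (x - α * y) :=
    (Real.log_le_iff_le_exp (by positivity)).1 hx
  have hexp : α * y ≤ Real.exp (α * y) - 1 := by linarith [Real.add_one_le_exp (α * y)]
  have hsplit : Real.exp x * (1 - Real.exp (-(α * y)))
      = Real.exp (x - α * y) * (Real.exp (α * y) - 1) := by
    rw [mul_sub, mul_sub, ← Real.exp_add, ← Real.exp_add]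
    ring_nf
  have hA : κ * n / (n - 1) * y ≤ (1 / α) * Real.exp x * (1 - Real.exp (-(α * y))) := by
    rw [mul_assoc, hsplit]
    calc κ * n / (n - 1) * y = (1 / α) * (κ * n / (n - 1) * (α * y)) := by field_simp
      _ ≤ _ := by gcongr
  have hc : r ≤ (r - μ - s) * (n / (n - 1)) := by
    rw [← mul_div_assoc, le_div_iff₀ hn1]
    nlinarith [mul_pos (mul_pos hs hn) hn1]
  calc r * (κ * y) ≤ (r - μ - s) * (n / (n - 1)) * (κ * y) := by gcongr
    _ = (r - μ - s) * (κ * n / (n - 1) * y) := by ring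
    _ ≤ _ := mul_le_mul_of_nonneg_left hA (by linarith)


/-- Supersolution property of `w₁(x,y) = (1/α)e^x(1 − e^{−αy}) − κy` on the region
`𝕊₁ = {y > 0, x − αy ≥ x₀*}`: `(σ²/2)∂ₓₓw₁ + μ₀∂ₓw₁ − r w₁ ≤ 0`. -/
theorem stmt15 (σ κ α μ₀ r n x₀ : ℝ) (hσ : 0 < σ) (hκ : 0 < κ) (hα : 0 < α)
    (hr : μ₀ + σ ^ 2 / 2 < r)
    (hn : 0 < n) (hroot : σ ^ 2 / 2 * n ^ 2 + μ₀ * n - r = 0)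
    (hx₀ : x₀ = Real.log (κ * n / (n - 1)))
    (w₁ : ℝ → ℝ → ℝ)
    (hw₁ : ∀ x y : ℝ, w₁ x y = (1 / α) * Real.exp x * (1 - Real.exp (-(α * y))) - κ * y) :
    ∀ x y : ℝ, 0 < y → x₀ ≤ x - α * y →
      σ ^ 2 / 2 * deriv (fun x' => deriv (fun x'' => w₁ x'' y) x') x +
        μ₀ * deriv (fun x' => w₁ x' y) x - r * w₁ x y ≤ 0 := by
  intro x y hy hx
  subst hx₀
  have hs : 0 < σ ^ 2 / 2 := by positivity
  set A := (1 / α) * (1 - Real.exp (-(α * y))) with hA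
  have hw : (fun x' => w₁ x' y) = fun x' => A * Real.exp x' - κ * y := by
    funext x'
    rw [hw₁, hA]
    ring
  have hd : deriv (fun x' => w₁ x' y) = fun x' => A * Real.exp x' := by
    rw [hw]
    funext x'
    exact (((Real.hasDerivAt_exp x').const_mul A).sub_const _).deriv
  have hdd : deriv (fun x' => deriv (fun x'' => w₁ x'' y) x') x = A * Real.exp x := by
    simp only [hd]
    exact ((Real.hasDerivAt_exp x).const_mul A).deriv
  have key : r * (κ * y)
      ≤ (r - μ₀ - σ ^ 2 / 2) * ((1 / α) * Real.exp x * (1 - Real.exp (-(α * y)))) := by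
    rcases le_or_gt 0 r with hr0 | hr0
    · exact holding_cost_le hs hκ hα hr hr0 hn hroot hy hx
    · have h1 : 0 ≤ 1 - Real.exp (-(α * y)) := by
        rw [sub_nonneg, Real.exp_le_one_iff]
        linarith [mul_pos hα hy]
      have h2 : 0 ≤ r - μ₀ - σ ^ 2 / 2 := by linarith
      have h3 : r * (κ * y) ≤ 0 := mul_nonpos_of_nonpos_of_nonneg hr0.le (by positivity)
      exact h3.trans (by positivity)
  rw [hdd, hd, hw₁]
  linear_combination key
end
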